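/- arXiv:2302.01521 — 3 statements merged into one kernel-verified Lean document; each statement's English description precedes it below -/
import Mathlib

section
/- For every natural number n ≥ 3, the alternating group Alt(n) in its natural action on n points is an IBIS group, and its base size is n − 2; in particular every irredundant base for this action has length n − 2. -/
/-- The pointwise stabiliser of a tuple (list) of points of `Ω` in `G`. -/
def listStabilizer (G : Type*) {Ω : Type*} [Group G] [MulAction G Ω] (l : List Ω) : Subgroup G :=
  ⨅ ω ∈ l, MulAction.stabilizer G ω

/-- A tuple is a base for `G` if its pointwise stabiliser is trivial. -/
def IsBaseTuple (G : Type*) {Ω : Type*} [Group G] [MulAction G Ω] (l : List Ω) : Prop :=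
  listStabilizer G l = ⊥

/-- A tuple is irredundant if, for each `i`, the pointwise stabiliser of the first `i`
entries does not fix the `(i+1)`-st entry. -/
def IsIrredundantTuple (G : Type*) {Ω : Type*} [Group G] [MulAction G Ω] (l : List Ω) : Prop :=
  ∀ i : Fin l.length, ∃ g ∈ listStabilizer G (l.take i), g • l.get i ≠ l.get i

/-- The base size of `G` on `Ω`: the minimal length of a base. -/
noncomputable def baseSize (G Ω : Type*) [Group G] [MulAction G Ω] : ℕ :=
  sInf {n | ∃ l : List Ω, l.length = n ∧ IsBaseTuple G l}

/-- `G` is an IBIS group on `Ω` if all irredundant bases have the same length. -/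
def IsIBIS (G Ω : Type*) [Group G] [MulAction G Ω] : Prop :=
  ∀ l₁ l₂ : List Ω, IsBaseTuple G l₁ → IsIrredundantTuple G l₁ →
    IsBaseTuple G l₂ → IsIrredundantTuple G l₂ → l₁.length = l₂.length

/-! An even permutation is trivial or moves at least three points, and any three points carry a
`3`-cycle. Hence a tuple is a base for the alternating group exactly when it misses at most two
points. The entries of an irredundant tuple are distinct, and its proper prefixes are not bases, so
an irredundant base misses exactly two points. -/

section MulAction

variable {G Ω : Type*} [Group G] [MulAction G Ω] {l : List Ω}

theorem mem_listStabilizer {g : G} : g ∈ listStabilizer G l ↔ ∀ ω ∈ l, g • ω = ω := by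
  simp only [listStabilizer, Subgroup.mem_iInf, MulAction.mem_stabilizer_iff]

theorem IsBaseTuple.baseSize_le (hl : IsBaseTuple G l) : baseSize G Ω ≤ l.length :=
  Nat.sInf_le ⟨l, rfl, hl⟩

theorem IsBaseTuple.exists_length_eq_baseSize (hl : IsBaseTuple G l) :
    ∃ m : List Ω, IsBaseTuple G m ∧ m.length = baseSize G Ω := by
  have hne : {n | ∃ m : List Ω, m.length = n ∧ IsBaseTuple G m}.Nonempty := ⟨l.length, l, rfl, hl⟩
  obtain ⟨m, hm_length, hm⟩ := Nat.sInf_mem hne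
  exact ⟨m, hm, hm_length⟩

theorem IsIrredundantTuple.nodup (hl : IsIrredundantTuple G l) : l.Nodup := by
  refine List.pairwise_iff_getElem.2 fun i j hi hj hij heq => ?_
  obtain ⟨g, hg, hmoves⟩ := hl ⟨j, hj⟩
  have hmem : l[j] ∈ l.take j := List.mem_take_iff_getElem.2 ⟨i, lt_min hij hi, heq⟩
  exact hmoves (mem_listStabilizer.1 hg _ hmem)

theorem IsIrredundantTuple.not_isBaseTuple_take (hl : IsIrredundantTuple G l) {i : ℕ}
    (hi : i < l.length) : ¬ IsBaseTuple G (l.take i) := by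
  intro hbase
  obtain ⟨g, hg, hmoves⟩ := hl ⟨i, hi⟩
  have hg_one : g = 1 := (Subgroup.eq_bot_iff_forall _).1 hbase g hg
  exact hmoves (by rw [hg_one, one_smul])

end MulAction

section Perm

open Equiv Equiv.Perm Finset

variable {α : Type*} [Fintype α] [DecidableEq α]

theorem mem_listStabilizer_iff_support_subset {H : Subgroup (Perm α)} {g : H} {l : List α} :
    g ∈ listStabilizer H l ↔ (g : Perm α).support ⊆ l.toFinsetᶜ := by
  simp only [mem_listStabilizer, subset_iff, mem_support, mem_compl, List.mem_toFinset,
    Subgroup.smul_def, Perm.smul_def, not_imp_not]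

theorem three_le_card_support_of_mem_alternatingGroup {g : Perm α} (hg : g ∈ alternatingGroup α)
    (hg_one : g ≠ 1) : 3 ≤ #g.support := by
  have htwo_le : 2 ≤ #g.support := two_le_card_support_of_ne_one hg_one
  have hne_two : #g.support ≠ 2 := fun h => by
    have hodd : sign g = -1 := (card_support_eq_two.1 h).sign_eq
    exact absurd (hodd.symm.trans (mem_alternatingGroup.1 hg)) (by decide)
  omega

theorem exists_isThreeCycle_support_subset {s : Finset α} (hs : 3 ≤ #s) :
    ∃ g : Perm α, g.IsThreeCycle ∧ g.support ⊆ s := by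
  obtain ⟨a, b, c, ha, hb, hc, hab, hac, hbc⟩ := two_lt_card_iff.1 hs
  refine ⟨swap a b * swap a c, isThreeCycle_swap_mul_swap_same hab hac hbc, ?_⟩
  calc (swap a b * swap a c).support
    _ ⊆ (swap a b).support ∪ (swap a c).support := support_mul_le _ _
    _ = {a, b} ∪ {a, c} := by rw [support_swap hab, support_swap hac]
    _ ⊆ s := by simp only [union_subset_iff, insert_subset_iff, singleton_subset_iff, ha, hb, hc,
      and_self]

theorem isBaseTuple_alternatingGroup_iff {l : List α} :
    IsBaseTuple (alternatingGroup α) l ↔ Fintype.card α ≤ #l.toFinset + 2 := by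
  have hcard : #l.toFinset + #l.toFinsetᶜ = Fintype.card α := card_add_card_compl _
  rw [IsBaseTuple, Subgroup.eq_bot_iff_forall]
  constructor
  · intro htriv
    by_contra! hlt
    obtain ⟨g, hg, hsupp⟩ := exists_isThreeCycle_support_subset (s := l.toFinsetᶜ) (by omega)
    have hg_one := htriv ⟨g, hg.mem_alternatingGroup⟩
      (mem_listStabilizer_iff_support_subset.2 hsupp)
    exact hg.ne_one (congrArg Subtype.val hg_one)
  · intro hle g hg
    by_contra hg_one
    have hthree : 3 ≤ #(g : Perm α).support :=
      three_le_card_support_of_mem_alternatingGroup g.2 (by simpa using hg_one)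
    have hsupp := card_le_card (mem_listStabilizer_iff_support_subset.1 hg)
    omega

theorem card_le_length_add_two_of_isBaseTuple_alternatingGroup {l : List α}
    (hl : IsBaseTuple (alternatingGroup α) l) : Fintype.card α ≤ l.length + 2 :=
  (isBaseTuple_alternatingGroup_iff.1 hl).trans (by gcongr; exact l.toFinset_card_le)

theorem isBaseTuple_alternatingGroup_iff_of_nodup {l : List α} (hl : l.Nodup) :
    IsBaseTuple (alternatingGroup α) l ↔ Fintype.card α ≤ l.length + 2 := by
  rw [isBaseTuple_alternatingGroup_iff, List.toFinset_card_of_nodup hl]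

variable [Nontrivial α]

theorem length_add_two_eq_card_of_isIrredundantTuple_alternatingGroup {l : List α}
    (hbase : IsBaseTuple (alternatingGroup α) l)
    (hirr : IsIrredundantTuple (alternatingGroup α) l) : l.length + 2 = Fintype.card α := by
  refine le_antisymm ?_ (card_le_length_add_two_of_isBaseTuple_alternatingGroup hbase)
  rcases l.length.eq_zero_or_pos with hzero | hpos
  · rw [hzero, zero_add]
    exact Fintype.one_lt_card
  · have hprefix := hirr.not_isBaseTuple_take (Nat.sub_one_lt_of_lt hpos)
    rw [isBaseTuple_alternatingGroup_iff_of_nodup (hirr.nodup.sublist (List.take_sublist _ _)),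
      List.length_take] at hprefix
    omega

variable (α)

theorem exists_isBaseTuple_alternatingGroup_length_add_two :
    ∃ l : List α, IsBaseTuple (alternatingGroup α) l ∧ l.length + 2 = Fintype.card α := by
  have htwo_le : 2 ≤ Fintype.card α := Fintype.one_lt_card
  have hlength : ((univ : Finset α).toList.take (Fintype.card α - 2)).length + 2 =
      Fintype.card α := by
    rw [List.length_take, length_toList, card_univ]
    omega
  exact ⟨_, (isBaseTuple_alternatingGroup_iff_of_nodup
    ((nodup_toList _).sublist (List.take_sublist _ _))).2 hlength.ge, hlength⟩

theorem baseSize_alternatingGroup_add_two :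
    baseSize (alternatingGroup α) α + 2 = Fintype.card α := by
  obtain ⟨l, hl, hlength⟩ := exists_isBaseTuple_alternatingGroup_length_add_two α
  have hle : baseSize (alternatingGroup α) α ≤ l.length := hl.baseSize_le
  obtain ⟨m, hm, hm_length⟩ := hl.exists_length_eq_baseSize
  have hge := card_le_length_add_two_of_isBaseTuple_alternatingGroup hm
  omega

end Perm

theorem alternatingGroup_isIBIS_general (α : Type*) [Fintype α] [DecidableEq α] [Nontrivial α] :
    IsIBIS (alternatingGroup α) α ∧
    baseSize (alternatingGroup α) α = Fintype.card α - 2 ∧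
    ∀ l : List α, IsBaseTuple (alternatingGroup α) l →
      IsIrredundantTuple (alternatingGroup α) l → l.length = Fintype.card α - 2 := by
  have hlength : ∀ l : List α, IsBaseTuple (alternatingGroup α) l →
      IsIrredundantTuple (alternatingGroup α) l → l.length = Fintype.card α - 2 :=
    fun l hbase hirr =>
      Nat.eq_sub_of_add_eq
        (length_add_two_eq_card_of_isIrredundantTuple_alternatingGroup hbase hirr)
  exact ⟨fun l₁ l₂ hbase₁ hirr₁ hbase₂ hirr₂ =>
      (hlength l₁ hbase₁ hirr₁).trans (hlength l₂ hbase₂ hirr₂).symm,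
    Nat.eq_sub_of_add_eq (baseSize_alternatingGroup_add_two α), hlength⟩

/-- For `n ≥ 3`, the alternating group on `n` points in its natural action is an IBIS group
of base size `n - 2`; in particular every irredundant base has length `n - 2`. -/
theorem alternatingGroup_isIBIS (n : ℕ) (hn : 3 ≤ n) :
    IsIBIS (alternatingGroup (Fin n)) (Fin n) ∧
    baseSize (alternatingGroup (Fin n)) (Fin n) = n - 2 ∧
    ∀ l : List (Fin n), IsBaseTuple (alternatingGroup (Fin n)) l →
      IsIrredundantTuple (alternatingGroup (Fin n)) l → l.length = n - 2 := by
  have : Nontrivial (Fin n) := Fin.nontrivial_iff_two_le.2 (by omega)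
  simpa only [Fintype.card_fin] using alternatingGroup_isIBIS_general (Fin n)
end

section
/- Let G be a finite group acting faithfully on a set Ω. Then G is an IBIS group on Ω if and only if every reordering of every irredundant base of G is again an irredundant base (equivalently, is irredundant). -/
/-!
Every tuple has an irredundant subtuple with the same stabiliser: drop the entries already fixed by
the stabiliser of their predecessors. Applied to a reordering of an irredundant base of an IBIS
group, this subtuple is an irredundant base, so it has full length and nothing was dropped.

Conversely, as soon as some base `b` exists, an irredundant tuple `l` extends to an irredundant base
by an irredundant subtuple of `b` relative to the stabiliser of `l`. Hence if reordering preserves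
irredundant bases, it preserves irredundant tuples. This gives a Steinitz exchange: fixing one point
shortens an irredundant tuple by at most one entry, so no irredundant tuple is longer than a base.
-/

section

open MulAction

variable {G Ω : Type*} [Group G] [MulAction G Ω] {H : Subgroup G} {x : Ω} {a b l l' : List Ω}

lemma listStabilizer_nil : listStabilizer G ([] : List Ω) = ⊤ := by
  simp [listStabilizer]

lemma listStabilizer_cons (x : Ω) (l : List Ω) :
    listStabilizer G (x :: l) = stabilizer G x ⊓ listStabilizer G l := by
  simp [listStabilizer, iInf_or, iInf_inf_eq]

lemma listStabilizer_append (l m : List Ω) :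
    listStabilizer G (l ++ m) = listStabilizer G l ⊓ listStabilizer G m := by
  simp [listStabilizer, iInf_or, iInf_inf_eq]

lemma listStabilizer_eq_of_perm (h : l.Perm l') : listStabilizer G l = listStabilizer G l' := by
  simp [listStabilizer, h.mem_iff]

/-- Irredundancy of a tuple for the action of a subgroup `H` of `G`: the pointwise stabiliser in `H`
of the entries before any given entry does not fix that entry. Keeping `H` as a subgroup of `G`,
rather than a group acting on `Ω`, lets inductions on the tuple replace `H` by point stabilisers. -/
def IrredundantOver (H : Subgroup G) (l : List Ω) : Prop :=
  ∀ i : Fin l.length, ¬ H ⊓ listStabilizer G (l.take i) ≤ stabilizer G (l.get i)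

lemma irredundantOver_top : IrredundantOver (⊤ : Subgroup G) l ↔ IsIrredundantTuple G l := by
  simp [IrredundantOver, IsIrredundantTuple, SetLike.not_le_iff_exists]

lemma irredundantOver_nil (H : Subgroup G) : IrredundantOver H ([] : List Ω) :=
  fun i => i.elim0

lemma irredundantOver_cons :
    IrredundantOver H (x :: l) ↔
      ¬ H ≤ stabilizer G x ∧ IrredundantOver (H ⊓ stabilizer G x) l := by
  simp [IrredundantOver, Fin.forall_fin_succ, listStabilizer_nil, listStabilizer_cons, inf_assoc]

lemma irredundantOver_append :
    IrredundantOver H (a ++ b) ↔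
      IrredundantOver H a ∧ IrredundantOver (H ⊓ listStabilizer G a) b := by
  induction a generalizing H with
  | nil => simp [irredundantOver_nil, listStabilizer_nil]
  | cons x a ih => simp [irredundantOver_cons, ih, listStabilizer_cons, inf_assoc, and_assoc]

lemma IrredundantOver.eq_nil_of_bot (h : IrredundantOver (⊥ : Subgroup G) l) : l = [] := by
  cases l with
  | nil => rfl
  | cons x l => exact absurd bot_le (irredundantOver_cons.1 h).1

lemma exists_sublist_irredundantOver (H : Subgroup G) (l : List Ω) :
    ∃ m : List Ω, m.Sublist l ∧ IrredundantOver H m ∧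
      H ⊓ listStabilizer G m = H ⊓ listStabilizer G l := by
  induction l generalizing H with
  | nil => exact ⟨[], .refl _, irredundantOver_nil H, rfl⟩
  | cons x l ih =>
    by_cases hx : H ≤ stabilizer G x
    · obtain ⟨m, hml, hm, hstab⟩ := ih H
      refine ⟨m, hml.cons x, hm, ?_⟩
      rw [listStabilizer_cons, ← inf_assoc, inf_eq_left.2 hx, hstab]
    · obtain ⟨m, hml, hm, hstab⟩ := ih (H ⊓ stabilizer G x)
      refine ⟨x :: m, hml.cons_cons x, irredundantOver_cons.2 ⟨hx, hm⟩, ?_⟩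
      simpa only [listStabilizer_cons, inf_assoc] using hstab

lemma IsBaseTuple.exists_sublist_irredundant (h : IsBaseTuple G l) :
    ∃ m : List Ω, m.Sublist l ∧ IsBaseTuple G m ∧ IsIrredundantTuple G m := by
  obtain ⟨m, hml, hm, hstab⟩ := exists_sublist_irredundantOver (⊤ : Subgroup G) l
  rw [top_inf_eq, top_inf_eq] at hstab
  exact ⟨m, hml, hstab.trans h, irredundantOver_top.1 hm⟩

lemma IsBaseTuple.exists_append_irredundant (hb : IsBaseTuple G b)
    (hl : IsIrredundantTuple G l) :
    ∃ m : List Ω, IsBaseTuple G (l ++ m) ∧ IsIrredundantTuple G (l ++ m) := by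
  obtain ⟨m, -, hm, hstab⟩ := exists_sublist_irredundantOver (listStabilizer G l) b
  refine ⟨m, ?_, ?_⟩
  · rw [IsBaseTuple, listStabilizer_append, hstab, hb, inf_bot_eq]
  · rw [← irredundantOver_top, irredundantOver_append, top_inf_eq]
    exact ⟨irredundantOver_top.2 hl, hm⟩

lemma IsIrredundantTuple.of_append (h : IsIrredundantTuple G (a ++ b)) :
    IsIrredundantTuple G a :=
  irredundantOver_top.1 (irredundantOver_append.1 (irredundantOver_top.2 h)).1

/-- Irredundancy over `H` does not depend on the order of the entries: the tuples irredundant over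
`H` then behave like the independent sets of a matroid. -/
def IrredundancePermInvariant (H : Subgroup G) (Ω : Type*) [MulAction G Ω] : Prop :=
  ∀ l l' : List Ω, IrredundantOver H l → l.Perm l' → IrredundantOver H l'

namespace IrredundancePermInvariant

lemma inf_stabilizer (hH : IrredundancePermInvariant H Ω) (x : Ω) :
    IrredundancePermInvariant (H ⊓ stabilizer G x) Ω := by
  by_cases hx : H ≤ stabilizer G x
  · rwa [inf_eq_left.2 hx]
  · intro l l' hl hperm
    have hxl : IrredundantOver H (x :: l) := irredundantOver_cons.2 ⟨hx, hl⟩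
    exact (irredundantOver_cons.1 (hH _ _ hxl (hperm.cons x))).2

lemma inf_stabilizer_le_comm (hH : IrredundancePermInvariant H Ω) {x y : Ω}
    (hx : ¬ H ≤ stabilizer G x) (hyx : H ⊓ stabilizer G y ≤ stabilizer G x) :
    H ⊓ stabilizer G x ≤ stabilizer G y := by
  by_contra hxy
  have hirr : IrredundantOver H [x, y] := by
    simp only [irredundantOver_cons]
    exact ⟨hx, hxy, irredundantOver_nil _⟩
  have hirr' := hH _ _ hirr (.swap y x [])
  exact (irredundantOver_cons.1 (irredundantOver_cons.1 hirr').2).1 hyx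

lemma exists_irredundantOver_inf_stabilizer (hH : IrredundancePermInvariant H Ω) (x : Ω)
    (hb : IrredundantOver H b) :
    ∃ b' : List Ω, IrredundantOver (H ⊓ stabilizer G x) b' ∧ b.length ≤ b'.length + 1 := by
  induction b generalizing H with
  | nil => exact ⟨[], irredundantOver_nil _, by simp⟩
  | cons y b ih =>
    by_cases hx : H ≤ stabilizer G x
    · exact ⟨y :: b, by rwa [inf_eq_left.2 hx], by simp⟩
    obtain ⟨hy, hb⟩ := irredundantOver_cons.1 hb
    by_cases hyx : H ⊓ stabilizer G y ≤ stabilizer G x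
    · have hxy := hH.inf_stabilizer_le_comm hx hyx
      have heq : H ⊓ stabilizer G x = H ⊓ stabilizer G y :=
        le_antisymm (le_inf inf_le_left hxy) (le_inf inf_le_left hyx)
      exact ⟨b, heq ▸ hb, by simp⟩
    · obtain ⟨b', hb', hlen⟩ := ih (hH.inf_stabilizer y) hb
      have hyxb' : IrredundantOver H (y :: x :: b') := by
        simp only [irredundantOver_cons]
        exact ⟨hy, hyx, hb'⟩
      have hxyb' := hH _ _ hyxb' (.swap x y b')
      exact ⟨y :: b', (irredundantOver_cons.1 hxyb').2, by simpa using hlen⟩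

lemma length_le_of_inf_listStabilizer_eq_bot (hH : IrredundancePermInvariant H Ω)
    (hb : IrredundantOver H b) (ha : H ⊓ listStabilizer G a = ⊥) : b.length ≤ a.length := by
  induction a generalizing H b with
  | nil =>
    obtain rfl : H = ⊥ := by simpa only [listStabilizer_nil, inf_top_eq] using ha
    rw [hb.eq_nil_of_bot]
  | cons x a ih =>
    obtain ⟨b', hb', hlen⟩ := hH.exists_irredundantOver_inf_stabilizer x hb
    rw [listStabilizer_cons, ← inf_assoc] at ha
    exact hlen.trans (Nat.succ_le_succ (ih (hH.inf_stabilizer x) hb' ha))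

end IrredundancePermInvariant

lemma IsBaseTuple.irredundancePermInvariant_top (hb : IsBaseTuple G b)
    (h : ∀ l l' : List Ω, IsBaseTuple G l → IsIrredundantTuple G l → l.Perm l' →
      IsIrredundantTuple G l') :
    IrredundancePermInvariant (⊤ : Subgroup G) Ω := by
  intro l l' hl hperm
  rw [irredundantOver_top] at hl ⊢
  obtain ⟨m, hbase, hirr⟩ := hb.exists_append_irredundant hl
  exact (h _ _ hbase hirr (hperm.append_right m)).of_append

lemma IsIBIS.isIrredundantTuple_of_perm (hG : IsIBIS G Ω) (hb : IsBaseTuple G l)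
    (hl : IsIrredundantTuple G l) (hb' : IsBaseTuple G l') (hperm : l.Perm l') :
    IsIrredundantTuple G l' := by
  obtain ⟨m, hml', hbm, hm⟩ := hb'.exists_sublist_irredundant
  have hlen : m.length = l'.length := (hG m l hbm hm hb hl).trans hperm.length_eq
  exact hml'.eq_of_length hlen ▸ hm

end

theorem isIBIS_iff_perm_of_irredundant_base_general {G Ω : Type*} [Group G] [MulAction G Ω] :
    IsIBIS G Ω ↔ ∀ l l' : List Ω, IsBaseTuple G l → IsIrredundantTuple G l → l.Perm l' →
      IsBaseTuple G l' ∧ IsIrredundantTuple G l' := by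
  constructor
  · intro hG l l' hb hl hperm
    have hb' : IsBaseTuple G l' := (listStabilizer_eq_of_perm hperm).symm.trans hb
    exact ⟨hb', hG.isIrredundantTuple_of_perm hb hl hb' hperm⟩
  · intro h
    have length_le : ∀ a b : List Ω, IsBaseTuple G a → IsIrredundantTuple G b →
        b.length ≤ a.length := by
      intro a b ha hb
      have hinv := ha.irredundancePermInvariant_top fun l l' hbase hl hperm =>
        (h l l' hbase hl hperm).2
      exact hinv.length_le_of_inf_listStabilizer_eq_bot (irredundantOver_top.2 hb)
        (by rwa [top_inf_eq])
    intro l₁ l₂ hb₁ hl₁ hb₂ hl₂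
    exact le_antisymm (length_le l₂ l₁ hb₂ hl₁) (length_le l₁ l₂ hb₁ hl₂)

/-- Cameron–Fon-Der-Flaass: `G` is IBIS iff every reordering of every irredundant base is
again an irredundant base. -/
theorem isIBIS_iff_perm_of_irredundant_base {G Ω : Type*} [Group G] [Finite G]
    [MulAction G Ω] [FaithfulSMul G Ω] :
    IsIBIS G Ω ↔ ∀ l l' : List Ω, IsBaseTuple G l → IsIrredundantTuple G l → l.Perm l' →
      IsBaseTuple G l' ∧ IsIrredundantTuple G l' :=
  isIBIS_iff_perm_of_irredundant_base_general
end

section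
/- Let f ≥ 2 be a natural number, let q = 2^f, and let L = SL(2, F_q) be the special linear group of degree 2 over the field with q elements (which has trivial centre, so L ≅ PSL₂(q)). Consider the action of the group L × L on the set L given by (a, b)·x = a x b⁻¹. This action is faithful, and L × L is an IBIS group on L, of degree |L| = q(q² − 1) = 2^f(2^{2f} − 1). -/
/-- `SL₂(q)` over the field with `q = 2^f` elements. -/
abbrev SL2 (f : ℕ) : Type _ := Matrix.SpecialLinearGroup (Fin 2) (GaloisField 2 f)

/-- The action of `L × L` on `L` given by `(a, b) • x = a * x * b⁻¹`. -/
noncomputable instance biMulAction (f : ℕ) : MulAction (SL2 f × SL2 f) (SL2 f) where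
  smul p x := p.1 * x * p.2⁻¹
  one_smul x := by
    show 1 * x * (1 : SL2 f)⁻¹ = x
    group
  mul_smul p q x := by
    show (p.1 * q.1) * x * (p.2 * q.2)⁻¹ = p.1 * (q.1 * x * q.2⁻¹) * p.2⁻¹
    group

/-!
A permutation `(a, b)` of a group `G` fixes `x` and `y` exactly when `b = x⁻¹ a x` and `a` commutes
with `y x⁻¹`, so stabilisers of nonempty tuples are isomorphic to centralisers. No two points form
a base, since `(y x⁻¹, x⁻¹ y)` fixes both `x` and `y`. When commuting is transitive on non-identity
elements, a centraliser that properly contains another nontrivial centraliser is the whole group,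
so an irredundant tuple has at most three entries. In `SL(2, R)` with `R` a domain, two
matrices commute exactly when the vectors `(A₀₁, A₀₀ - A₁₁, A₁₀)` and `(B₀₁, B₀₀ - B₁₁, B₁₀)` are
parallel, so commuting is transitive on non-central elements, and in characteristic two the only
central element is the identity.
-/

open Matrix
open scoped MatrixGroups

section PointwiseStabilizers

variable {G Ω : Type*} [Group G] [MulAction G Ω]

theorem mem_listStabilizer_iff {l : List Ω} {g : G} :
    g ∈ listStabilizer G l ↔ ∀ ω ∈ l, g • ω = ω := by
  simp only [listStabilizer, Subgroup.mem_iInf, MulAction.mem_stabilizer_iff]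

theorem IsBaseTuple.eq_one_of_forall_smul_eq {l : List Ω} (hl : IsBaseTuple G l) {g : G}
    (hg : ∀ ω ∈ l, g • ω = ω) : g = 1 :=
  (Subgroup.eq_bot_iff_forall _).mp hl g (mem_listStabilizer_iff.mpr hg)

theorem faithfulSMul_of_forall_smul_eq_imp_eq_one (h : ∀ g : G, (∀ ω : Ω, g • ω = ω) → g = 1) :
    FaithfulSMul G Ω where
  eq_of_smul_eq_smul {g₁ g₂} hg := by
    refine (inv_mul_eq_one.mp (h (g₂⁻¹ * g₁) fun ω ↦ ?_)).symm
    rw [mul_smul, hg, inv_smul_smul]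

end PointwiseStabilizers

/-- A group is commutative-transitive if commuting is a transitive relation on its non-identity
elements; equivalently, if centralisers of non-identity elements are abelian. -/
def IsCommutativeTransitive (G : Type*) [Group G] : Prop :=
  ∀ ⦃x y z : G⦄, y ≠ 1 → Commute x y → Commute y z → Commute x z

/-- The given action of `G × G` on `G` is the diagonal one, `(a, b) • x = a * x * b⁻¹`. A mixin on
top of `MulAction`, so that it applies to whichever instance is already present. -/
class IsDiagonalAction (G : Type*) [Group G] [MulAction (G × G) G] : Prop where
  smul_eq (p : G × G) (x : G) : p • x = p.1 * x * p.2⁻¹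

namespace IsDiagonalAction

variable {G : Type*} [Group G] [MulAction (G × G) G] [IsDiagonalAction G]

theorem smul_eq_self_iff {p : G × G} {x : G} : p • x = x ↔ p.1 * x = x * p.2 := by
  rw [smul_eq, mul_inv_eq_iff_eq_mul]

theorem smul_eq_self_iff_commute {p : G × G} {x y : G} (hx : p • x = x) :
    p • y = y ↔ Commute p.1 (y * x⁻¹) := by
  have hp : p.2 = x⁻¹ * p.1 * x := by
    rw [mul_assoc, smul_eq_self_iff.mp hx, inv_mul_cancel_left]
  rw [smul_eq_self_iff, hp, commute_iff_eq, ← mul_assoc p.1, mul_inv_eq_iff_eq_mul]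
  simp only [mul_assoc]

theorem faithfulSMul_of_center_eq_bot (hG : Subgroup.center G = ⊥) : FaithfulSMul (G × G) G := by
  refine faithfulSMul_of_forall_smul_eq_imp_eq_one fun p hp ↦ ?_
  have hcomm : ∀ x, p.1 * x = x * p.2 := fun x ↦ smul_eq_self_iff.mp (hp x)
  have hfst : p.1 = p.2 := by simpa only [mul_one, one_mul] using hcomm 1
  have hone : p.1 = 1 := by
    rw [← Subgroup.mem_bot, ← hG, Subgroup.mem_center_iff]
    exact fun x ↦ by rw [hcomm x, hfst]
  exact Prod.ext hone (hfst ▸ hone)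

theorem exists_ne_one_smul_eq_self_pair [Nontrivial G] (x y : G) :
    ∃ p : G × G, p ≠ 1 ∧ p • x = x ∧ p • y = y := by
  by_cases hxy : y = x
  · obtain ⟨g, hg⟩ := exists_ne (1 : G)
    have hfix : (g, x⁻¹ * g * x) • x = x := smul_eq_self_iff.mpr (by group)
    exact ⟨_, fun h ↦ hg (congrArg Prod.fst h), hfix, hxy ▸ hfix⟩
  · refine ⟨(y * x⁻¹, x⁻¹ * y), fun h ↦ hxy (mul_inv_eq_one.mp (congrArg Prod.fst h)), ?_, ?_⟩
    all_goals exact smul_eq_self_iff.mpr (by group)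

theorem three_le_length_of_isBaseTuple [Nontrivial G] {l : List G}
    (hl : IsBaseTuple (G × G) l) : 3 ≤ l.length := by
  by_contra! hlen
  obtain ⟨x, y, hsub⟩ : ∃ x y, l ⊆ [x, y] := by
    match l with
    | [] => exact ⟨1, 1, List.nil_subset _⟩
    | [x] => exact ⟨x, x, by simp⟩
    | [x, y] => exact ⟨x, y, List.Subset.refl _⟩
  obtain ⟨p, hp, hpx, hpy⟩ := exists_ne_one_smul_eq_self_pair x y
  have hfix : ∀ z ∈ [x, y], p • z = z := by simp [hpx, hpy]
  exact hp (hl.eq_one_of_forall_smul_eq fun z hz ↦ hfix z (hsub hz))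

theorem exists_commute_not_commute_of_isIrredundantTuple {x : G} {t : List G}
    (ht : IsIrredundantTuple (G × G) (x :: t)) (i : Fin t.length) :
    ∃ a : G, (∀ y ∈ t.take i, Commute a (y * x⁻¹)) ∧ ¬Commute a (t.get i * x⁻¹) := by
  obtain ⟨p, hp, hpi⟩ := ht i.succ
  have hfix : ∀ y ∈ x :: t.take i, p • y = y := mem_listStabilizer_iff.mp hp
  have hx : p • x = x := hfix x List.mem_cons_self
  exact ⟨p.1, fun y hy ↦ (smul_eq_self_iff_commute hx).mp (hfix y (List.mem_cons_of_mem x hy)),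
    fun h ↦ hpi ((smul_eq_self_iff_commute hx).mpr h)⟩

theorem length_le_three_of_isIrredundantTuple (hG : IsCommutativeTransitive G) {l : List G}
    (hl : IsIrredundantTuple (G × G) l) : l.length ≤ 3 := by
  match l with
  | [] | [_] | [_, _] | [_, _, _] => simp
  | x :: y :: z :: w :: t =>
    obtain ⟨a₀, -, ha₀y⟩ := exists_commute_not_commute_of_isIrredundantTuple hl ⟨0, by simp⟩
    obtain ⟨a, ha, haz⟩ := exists_commute_not_commute_of_isIrredundantTuple hl ⟨1, by simp⟩
    obtain ⟨c, hc, hcw⟩ := exists_commute_not_commute_of_isIrredundantTuple hl ⟨2, by simp⟩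
    have hyx : y * x⁻¹ ≠ 1 := fun h ↦ ha₀y (h ▸ Commute.one_right a₀)
    have hc_ne : c ≠ 1 := fun h ↦ hcw (h ▸ Commute.one_left _)
    have hac : Commute a c := hG hyx (ha y (by simp)) (hc y (by simp)).symm
    exact absurd (hG hc_ne hac (hc z (by simp))) haz

theorem isIBIS_of_isCommutativeTransitive [Nontrivial G] (hG : IsCommutativeTransitive G) :
    IsIBIS (G × G) G := by
  have hlen (l : List G) (hb : IsBaseTuple (G × G) l) (hi : IsIrredundantTuple (G × G) l) :
      l.length = 3 :=
    (length_le_three_of_isIrredundantTuple hG hi).antisymm (three_le_length_of_isBaseTuple hb)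
  exact fun l₁ l₂ hb₁ hi₁ hb₂ hi₂ ↦ (hlen l₁ hb₁ hi₁).trans (hlen l₂ hb₂ hi₂).symm

end IsDiagonalAction

section ParallelVectors

variable {R : Type*} [CommRing R]

theorem smul_eq_smul_of_cross_eq_zero {u v : Fin 3 → R} (h : u ⨯₃ v = 0) (i : Fin 3) :
    u i • v = v i • u := by
  rw [cross_apply] at h
  have h₀ : u 1 * v 2 - u 2 * v 1 = 0 := congrFun h 0
  have h₁ : u 2 * v 0 - u 0 * v 2 = 0 := congrFun h 1
  have h₂ : u 0 * v 1 - u 1 * v 0 = 0 := congrFun h 2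
  ext j
  fin_cases i <;> fin_cases j <;>
    simp only [Pi.smul_apply, smul_eq_mul, Fin.zero_eta, Fin.mk_one, Fin.reduceFinMk] <;> grind

theorem cross_eq_zero_trans [NoZeroDivisors R] {u v w : Fin 3 → R} (hv : v ≠ 0) (huv : u ⨯₃ v = 0)
    (hvw : v ⨯₃ w = 0) : u ⨯₃ w = 0 := by
  obtain ⟨i, hi⟩ := Function.ne_iff.mp hv
  have hu : v i • u = u i • v := (smul_eq_smul_of_cross_eq_zero huv i).symm
  have hw : v i • w = w i • v := smul_eq_smul_of_cross_eq_zero hvw i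
  have hscaled : v i • v i • (u ⨯₃ w) = 0 := calc
    v i • v i • (u ⨯₃ w) = (v i • u) ⨯₃ (v i • w) := by simp
    _ = (u i • v) ⨯₃ (w i • v) := by rw [hu, hw]
    _ = 0 := by simp
  exact (smul_eq_zero_iff_right hi).mp ((smul_eq_zero_iff_right hi).mp hscaled)

end ParallelVectors

section CommutingMatrices

variable {R : Type*} [CommRing R]

/-- Coordinates of a `2 × 2` matrix modulo scalar matrices. The order is chosen so that commutators
become cross products. -/
def coordsModScalars (A : Matrix (Fin 2) (Fin 2) R) : Fin 3 → R :=
  ![A 0 1, A 0 0 - A 1 1, A 1 0]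

theorem commute_iff_cross_coordsModScalars_eq_zero (A B : Matrix (Fin 2) (Fin 2) R) :
    Commute A B ↔ coordsModScalars A ⨯₃ coordsModScalars B = 0 := by
  simp only [commute_iff_eq, ← Matrix.ext_iff, Matrix.mul_apply, Fin.sum_univ_two,
    Fin.forall_fin_two, coordsModScalars, cross_apply, cons_val_one, cons_val_zero, cons_val,
    cons_eq_zero_iff, zero_empty, and_true]
  grind

theorem specialLinearGroup_commute_iff {n : Type*} [Fintype n] [DecidableEq n]
    {x y : SpecialLinearGroup n R} :
    Commute x y ↔ Commute (x : Matrix n n R) (y : Matrix n n R) :=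
  (commute_map_iff SpecialLinearGroup.coeMonoidHom_injective).symm

theorem specialLinearGroup_two_commute_trans [NoZeroDivisors R] {x y z : SL(2, R)}
    (hy : y ∉ Subgroup.center SL(2, R)) (hxy : Commute x y) (hyz : Commute y z) :
    Commute x z := by
  rw [specialLinearGroup_commute_iff, commute_iff_cross_coordsModScalars_eq_zero] at hxy hyz ⊢
  refine cross_eq_zero_trans (fun hzero ↦ hy ?_) hxy hyz
  refine Subgroup.mem_center_iff.mpr fun g ↦ Commute.eq ?_
  rw [specialLinearGroup_commute_iff, commute_iff_cross_coordsModScalars_eq_zero, hzero, map_zero]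

theorem specialLinearGroup_two_center_eq_bot_of_charTwo [IsReduced R] [CharP R 2] :
    Subgroup.center SL(2, R) = ⊥ := by
  refine (Subgroup.eq_bot_iff_forall _).mpr fun z hz ↦ ?_
  obtain ⟨r, hr, hrz⟩ := Matrix.SpecialLinearGroup.mem_center_iff.mp hz
  have hr_one : r = 1 := frobenius_inj R 2 (by simpa [frobenius_def] using hr)
  refine SpecialLinearGroup.coeMonoidHom_injective ?_
  rw [SpecialLinearGroup.coeMonoidHom_apply, ← hrz, hr_one, map_one, map_one]

theorem specialLinearGroup_two_isCommutativeTransitive_of_charTwo [NoZeroDivisors R] [CharP R 2] :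
    IsCommutativeTransitive SL(2, R) := fun x y z hy hxy hyz ↦
  specialLinearGroup_two_commute_trans
    (by rwa [specialLinearGroup_two_center_eq_bot_of_charTwo, Subgroup.mem_bot]) hxy hyz

theorem specialLinearGroup_nontrivial {n : Type*} [Fintype n] [DecidableEq n] [Nontrivial n]
    [Nontrivial R] : Nontrivial (SpecialLinearGroup n R) := by
  obtain ⟨i, j, hij⟩ := exists_pair_ne n
  refine ⟨SpecialLinearGroup.transvection hij 1, 1, fun h ↦ one_ne_zero (α := R) ?_⟩
  exact (SpecialLinearGroup.transvection_mem_center_iff hij 1).mp (h ▸ Subgroup.one_mem _)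

end CommutingMatrices

section Cardinality

theorem range_toGL_eq_ker_det {n R : Type*} [Fintype n] [DecidableEq n] [CommRing R] :
    (SpecialLinearGroup.toGL (n := n) (R := R)).range = GeneralLinearGroup.det.ker := by
  ext g
  rw [MonoidHom.mem_ker, MonoidHom.mem_range]
  refine ⟨?_, fun hg ↦ ⟨⟨g, congrArg Units.val hg⟩, Units.ext rfl⟩⟩
  rintro ⟨x, rfl⟩
  exact SpecialLinearGroup.coeToGL_det x

theorem card_specialLinearGroup_mul_card_units {n R : Type*} [Fintype n] [DecidableEq n]
    [Nonempty n] [CommRing R] :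
    Nat.card (SpecialLinearGroup n R) * Nat.card Rˣ = Nat.card (GL n R) := by
  have hker : Nat.card (SpecialLinearGroup n R) =
      Nat.card (GeneralLinearGroup.det (n := n) (R := R)).ker := by
    rw [← range_toGL_eq_ker_det]
    exact Nat.card_congr (MonoidHom.ofInjective SpecialLinearGroup.toGL_injective).toEquiv
  rw [hker, ← Subgroup.card_mul_index (GeneralLinearGroup.det (n := n) (R := R)).ker,
    Subgroup.index_ker, MonoidHom.range_eq_top.mpr GeneralLinearGroup.det_surjective,
    Subgroup.card_top]

theorem card_specialLinearGroup_two (F : Type*) [Field F] [Finite F] :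
    Nat.card SL(2, F) = Nat.card F * (Nat.card F ^ 2 - 1) := by
  have := Fintype.ofFinite F
  have hq : 1 < Nat.card F := Finite.one_lt_card
  have hGL : Nat.card (GL (Fin 2) F) =
      (Nat.card F ^ 2 - 1) * (Nat.card F ^ 2 - Nat.card F) := by
    simpa [Fin.prod_univ_two] using Matrix.card_GL_field (𝔽 := F) 2
  refine Nat.eq_of_mul_eq_mul_right (Nat.sub_pos_of_lt hq) ?_
  rw [← Nat.card_units, card_specialLinearGroup_mul_card_units, hGL, Nat.card_units]
  have hfactor : Nat.card F ^ 2 - Nat.card F = Nat.card F * (Nat.card F - 1) := by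
    rw [Nat.mul_sub_one, sq]
  rw [hfactor]
  ring

end Cardinality

theorem diagonal_PSL2_isIBIS_general (R : Type*) [CommRing R] [IsDomain R] [CharP R 2]
    [MulAction (SL(2, R) × SL(2, R)) SL(2, R)] [IsDiagonalAction SL(2, R)] :
    Subgroup.center SL(2, R) = ⊥ ∧
    FaithfulSMul (SL(2, R) × SL(2, R)) SL(2, R) ∧
    IsIBIS (SL(2, R) × SL(2, R)) SL(2, R) ∧
    (Finite R → Nat.card SL(2, R) = Nat.card R * (Nat.card R ^ 2 - 1)) := by
  have := specialLinearGroup_nontrivial (n := Fin 2) (R := R)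
  refine ⟨specialLinearGroup_two_center_eq_bot_of_charTwo,
    IsDiagonalAction.faithfulSMul_of_center_eq_bot
      specialLinearGroup_two_center_eq_bot_of_charTwo,
    IsDiagonalAction.isIBIS_of_isCommutativeTransitive
      specialLinearGroup_two_isCommutativeTransitive_of_charTwo, fun _ ↦ ?_⟩
  let := (Finite.isDomain_to_isField R).toField
  exact card_specialLinearGroup_two R

instance isDiagonalAction_SL2 (f : ℕ) : IsDiagonalAction (SL2 f) where
  smul_eq _ _ := rfl

/-- For `f ≥ 2` and `q = 2^f`, `L = SL₂(q) ≅ PSL₂(q)` has trivial centre, the action of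
`L × L` on `L` by `(a, b) • x = a x b⁻¹` is faithful, and `L × L` is an IBIS group on `L`
of degree `|L| = q(q² − 1) = 2^f(2^{2f} − 1)`. -/
theorem diagonal_PSL2_isIBIS (f : ℕ) (hf : 2 ≤ f) :
    (∀ (p : SL2 f × SL2 f) (x : SL2 f), p • x = p.1 * x * p.2⁻¹) ∧
    Subgroup.center (SL2 f) = ⊥ ∧
    FaithfulSMul (SL2 f × SL2 f) (SL2 f) ∧
    IsIBIS (SL2 f × SL2 f) (SL2 f) ∧
    Nat.card (SL2 f) = 2 ^ f * (2 ^ (2 * f) - 1) := by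
  obtain ⟨hcenter, hfaithful, hIBIS, hcard⟩ := diagonal_PSL2_isIBIS_general (GaloisField 2 f)
  exact ⟨fun _ _ ↦ rfl, hcenter, hfaithful, hIBIS,
    by rw [hcard inferInstance, GaloisField.card 2 f (by omega), pow_mul']⟩
end
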